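/- arXiv:1911.01052 — 4 statements merged into one kernel-verified Lean document; each statement's English description precedes it below -/
import Mathlib

section
/- Let b, w be positive integers and r a positive integer, and let P(T_{b,w} = n) = ((b+w-1)!/(w-1)!) · ((w+n-2)!/(b+w+n-2)!) · (b/(b+w+n-1)) for n ≥ 1 be the distribution of the waiting time for the first black ball in a Pólya urn with b black and w white balls. Then the r-th moment ∑_{n=1}^∞ n^r P(T_{b,w} = n) is finite if and only if b > r. In particular, this criterion does not depend on w. -/
lemma polya_fact_low (v m b : ℕ) :
    (Nat.factorial (v + m) : ℝ) * ((m : ℝ) + 1) ^ b ≤ (Nat.factorial (b + v + m) : ℝ) := by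
  have h := Nat.factorial_mul_pow_le_factorial (m := v + m) (n := b)
  have h2 : Nat.factorial (v + m) * (m + 1) ^ b ≤ Nat.factorial (b + v + m) := by
    rw [show b + v + m = v + m + b by omega]
    refine le_trans (Nat.mul_le_mul_left _ (Nat.pow_le_pow_left ?_ b)) h
    omega
  exact_mod_cast h2

lemma polya_fact_up (v m b : ℕ) :
    (Nat.factorial (b + v + m) : ℝ) ≤
      (Nat.factorial (v + m) : ℝ) * (((v + b + 1 : ℕ) : ℝ) * ((m : ℝ) + 1)) ^ b := by
  have h2 : Nat.factorial (b + v + m) ≤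
      Nat.factorial (v + m) * ((v + b + 1) * (m + 1)) ^ b := by
    rw [show b + v + m = v + m + b by omega, ← Nat.factorial_mul_ascFactorial]
    refine Nat.mul_le_mul_left _ ?_
    refine le_trans (Nat.ascFactorial_le_pow_add _ _) (Nat.pow_le_pow_left ?_ b)
    nlinarith
  exact_mod_cast h2

/-- Let `P(T_{b,w} = n) = ((b+w-1)!/(w-1)!) ((w+n-2)!/(b+w+n-2)!) (b/(b+w+n-1))`, `n ≥ 1`,
be the distribution of the waiting time for the first black ball in a Pólya urn with
`b ≥ 1` black and `w ≥ 1` white balls. The `r`-th moment `∑_{n=1}^∞ n^r P(T_{b,w} = n)`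
(for `r ≥ 1`) is finite if and only if `b > r`; in particular this does not depend on `w`.
(The summand below vanishes at `n = 0` since `r ≥ 1`, so summing over all `n : ℕ`
agrees with summing over `n ≥ 1`.) -/
theorem polya_moment_finite_iff (b w r : ℕ) (hb : 1 ≤ b) (hw : 1 ≤ w) (hr : 1 ≤ r) :
    Summable (fun n : ℕ => (n : ℝ) ^ r *
        (((Nat.factorial (b + w - 1) : ℝ) / (Nat.factorial (w - 1) : ℝ))
          * ((Nat.factorial (w + n - 2) : ℝ) / (Nat.factorial (b + w + n - 2) : ℝ))
          * ((b : ℝ) / ((b : ℝ) + w + n - 1))))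
      ↔ r < b := by
  obtain ⟨v, rfl⟩ : ∃ v, w = v + 1 := ⟨w - 1, by omega⟩
  rw [← summable_nat_add_iff 1]
  have e : ∀ m : ℕ, v + 1 + (m + 1) - 2 = v + m := fun m => by omega
  have e' : ∀ m : ℕ, b + (v + 1) + (m + 1) - 2 = b + v + m := fun m => by omega
  simp only [e, e']
  set C : ℝ := (Nat.factorial (b + (v + 1) - 1) : ℝ) / (Nat.factorial (v + 1 - 1) : ℝ) with hC
  have hCpos : 0 < C := by positivity
  have hbpos : (0 : ℝ) < b := by exact_mod_cast hb
  have hden : ∀ m : ℕ, (b : ℝ) + ((v + 1 : ℕ) : ℝ) + ((m + 1 : ℕ) : ℝ) - 1 = b + v + m + 1 := by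
    intro m; push_cast; ring
  simp only [hden]
  constructor
  · intro hs
    by_contra! hbr
    set K : ℝ := ((v + b + 1 : ℕ) : ℝ) with hK
    have hKpos : 0 < K := by positivity
    have h1 : Summable (fun m : ℕ => (C * b / K ^ (b + 1)) * (1 / ((m + 1 : ℕ) : ℝ))) := by
      refine Summable.of_nonneg_of_le (fun m => by positivity) (fun m => ?_) hs
      have hup := polya_fact_up v m b
      rw [← hK] at hup
      have hF : (0 : ℝ) < Nat.factorial (v + m) := by positivity
      have hG : (0 : ℝ) < Nat.factorial (b + v + m) := by positivity
      have hx : (1 : ℝ) ≤ (m : ℝ) + 1 := by linarith [Nat.cast_nonneg (α := ℝ) m]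
      have hA : 1 / (K * ((m : ℝ) + 1)) ^ b ≤
          (Nat.factorial (v + m) : ℝ) / (Nat.factorial (b + v + m) : ℝ) := by
        rw [div_le_div_iff₀ (by positivity) hG]; linarith
      have hB : (b : ℝ) / (K * ((m : ℝ) + 1)) ≤ (b : ℝ) / (b + v + m + 1) := by
        refine div_le_div_of_nonneg_left hbpos.le (by positivity) ?_
        rw [hK]; push_cast
        nlinarith [mul_nonneg (add_nonneg (Nat.cast_nonneg (α := ℝ) v) hbpos.le)
          (Nat.cast_nonneg (α := ℝ) m)]
      have hP : ((m : ℝ) + 1) ^ b ≤ ((m : ℝ) + 1) ^ r := pow_le_pow_right₀ hx hbr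
      calc _ = ((m : ℝ) + 1) ^ b * (C * (1 / (K * ((m : ℝ) + 1)) ^ b) *
            ((b : ℝ) / (K * ((m : ℝ) + 1)))) := by
              push_cast; field_simp; simp only [mul_pow, pow_succ]; ring
        _ ≤ _ := by push_cast; gcongr
    rw [summable_mul_left_iff (by positivity)] at h1
    exact Real.not_summable_one_div_natCast
      ((summable_nat_add_iff (f := fun n : ℕ => 1 / (n : ℝ)) 1).1 h1)
  · intro hrb
    have h2 : Summable (fun m : ℕ => (C * b) * (1 / ((m + 1 : ℕ) : ℝ) ^ 2)) :=
      ((summable_nat_add_iff (f := fun n : ℕ => 1 / (n : ℝ) ^ 2) 1).2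
        (Real.summable_one_div_nat_pow.2 (by norm_num))).mul_left _
    refine Summable.of_nonneg_of_le (fun m => by positivity) (fun m => ?_) h2
    have hlow := polya_fact_low v m b
    have hG : (0 : ℝ) < Nat.factorial (b + v + m) := by positivity
    have hx : (1 : ℝ) ≤ (m : ℝ) + 1 := by linarith [Nat.cast_nonneg (α := ℝ) m]
    have hA : (Nat.factorial (v + m) : ℝ) / (Nat.factorial (b + v + m) : ℝ) ≤
        1 / ((m : ℝ) + 1) ^ b := by
      rw [div_le_div_iff₀ hG (by positivity)]; linarith
    have hB : (b : ℝ) / (b + v + m + 1) ≤ (b : ℝ) / ((m : ℝ) + 1) := by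
      refine div_le_div_of_nonneg_left hbpos.le (by positivity) ?_
      linarith [Nat.cast_nonneg (α := ℝ) v]
    have hP : ((m : ℝ) + 1) ^ (r + 1) ≤ ((m : ℝ) + 1) ^ b := pow_le_pow_right₀ hx hrb
    calc _ ≤ ((m : ℝ) + 1) ^ r * (C * (1 / ((m : ℝ) + 1) ^ b) * ((b : ℝ) / ((m : ℝ) + 1))) := by
            push_cast; gcongr
      _ ≤ ((m : ℝ) + 1) ^ r * (C * (1 / ((m : ℝ) + 1) ^ (r + 1)) *
            ((b : ℝ) / ((m : ℝ) + 1))) := by gcongr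
      _ = _ := by push_cast; field_simp; simp only [mul_pow, pow_succ]; ring
end

section
/- For every positive integer w, the series ∑_{n=0}^∞ ∏_{i=0}^{n-1} (w+i)/(3+w+i) converges to (w+2)/2. Probabilistically: the waiting time T_{3,w} for the first black ball in a Pólya urn with 3 black and w white balls satisfies E[T_{3,w}] = (w+2)/2. -/
/-- The waiting time `T_{3,w}` for the first black ball in a Pólya urn with 3 black and
`w ≥ 1` white balls satisfies
`E[T_{3,w}] = ∑_{n=0}^∞ ∏_{i=0}^{n-1} (w+i)/(3+w+i) = (w+2)/2`. -/
theorem polya_three_black_expectation (w : ℕ) (hw : 1 ≤ w) :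
    HasSum (fun n : ℕ => ∏ i ∈ Finset.range n, (((w : ℝ) + i) / (3 + (w : ℝ) + i)))
      (((w : ℝ) + 2) / 2) := by
  have hw' : (0 : ℝ) < w := by exact_mod_cast hw
  have hP : ∀ n : ℕ, ∏ i ∈ Finset.range n, (((w : ℝ) + i) / (3 + (w : ℝ) + i)) =
      (w : ℝ) * (w + 1) * (w + 2) / ((w + n) * (w + n + 1) * (w + n + 2)) := by
    intro n
    induction n with
    | zero => 
      simp only [Finset.range_zero, Finset.prod_empty, Nat.cast_zero, add_zero]
      rw [div_self (by positivity)]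
    | succ k ih =>
      rw [Finset.prod_range_succ, ih, div_mul_div_comm, Nat.cast_succ,
        div_eq_div_iff (by positivity) (by positivity)]
      ring
  have hS : ∀ n : ℕ, ∑ m ∈ Finset.range n,
      (w : ℝ) * (w + 1) * (w + 2) / ((w + m) * (w + m + 1) * (w + m + 2)) =
      ((w : ℝ) + 2) / 2 - (w : ℝ) * (w + 1) * (w + 2) / 2 * (((w : ℝ) + n)⁻¹ * ((w : ℝ) + n + 1)⁻¹) := by
    intro n
    induction n with
    | zero =>
      simp only [Finset.range_zero, Finset.sum_empty, Nat.cast_zero, add_zero]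
      field_simp
      ring
    | succ k ih =>
      rw [Finset.sum_range_succ, ih, Nat.cast_succ]
      have h1 : (w : ℝ) + k ≠ 0 := by positivity
      have h2 : (w : ℝ) + k + 1 ≠ 0 := by positivity
      have h3 : (w : ℝ) + k + 2 ≠ 0 := by positivity
      have e1 : (w : ℝ) + (k + 1) = w + k + 1 := by ring
      have e2 : (w : ℝ) + k + 1 + 1 = w + k + 2 := by ring
      rw [e1, e2]
      field_simp
      ring
  simp_rw [hP]
  rw [hasSum_iff_tendsto_nat_of_nonneg (fun n => by positivity)]
  simp_rw [hS]
  have t0 : Filter.Tendsto (fun n : ℕ => (w : ℝ) + n) Filter.atTop Filter.atTop :=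
    Filter.tendsto_atTop_add_const_left _ _ tendsto_natCast_atTop_atTop
  have t1 := t0.inv_tendsto_atTop
  have t2 := (Filter.tendsto_atTop_add_const_right _ (1 : ℝ) t0).inv_tendsto_atTop
  have t := ((t1.mul t2).const_mul ((w : ℝ) * (w + 1) * (w + 2) / 2)).const_sub (((w : ℝ) + 2) / 2)
  simpa using t
end

section
/- For every positive integer w, the series ∑_{n=0}^∞ (2n+1) ∏_{i=0}^{n-1} (w+i)/(3+w+i) converges to (w+2)(2w+1)/2. Probabilistically: the waiting time T_{3,w} for the first black ball in a Pólya urn with 3 black and w white balls satisfies E[T_{3,w}²] = (w+2)(2w+1)/2. -/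
theorem polya_prod_aux (w : ℕ) (hw : 1 ≤ w) (n : ℕ) :
    ∏ i ∈ Finset.range n, (((w : ℝ) + i) / (3 + (w : ℝ) + i)) =
      (w : ℝ) * (w + 1) * (w + 2) / (((w : ℝ) + n) * (w + n + 1) * (w + n + 2)) := by
  have hw' : (1 : ℝ) ≤ w := by exact_mod_cast hw
  induction n with
  | zero =>
    simp only [Finset.range_zero, Finset.prod_empty, Nat.cast_zero, add_zero]
    rw [div_self (by positivity)]
  | succ k ih =>
    have h1 : (w : ℝ) + k ≠ 0 := by positivity
    have h2 : (w : ℝ) + k + 1 ≠ 0 := by positivity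
    have h3 : (w : ℝ) + k + 2 ≠ 0 := by positivity
    have h4 : (w : ℝ) + k + 3 ≠ 0 := by positivity
    rw [Finset.prod_range_succ, ih]
    push_cast
    rw [show (3 : ℝ) + w + k = w + k + 3 by ring, show (w : ℝ) + (k + 1) = w + k + 1 by ring,
      show (w : ℝ) + k + 1 + 1 = w + k + 2 by ring, show (w : ℝ) + k + 1 + 2 = w + k + 3 by ring]
    field_simp

theorem polya_sum_aux (w : ℕ) (hw : 1 ≤ w) (n : ℕ) :
    ∑ k ∈ Finset.range n, (2 * (k : ℝ) + 1) *
        ∏ i ∈ Finset.range k, (((w : ℝ) + i) / (3 + (w : ℝ) + i)) =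
      ((w : ℝ) + 2) * (2 * (w : ℝ) + 1) / 2 -
        (w : ℝ) * (w + 1) * (w + 2) * (4 * n + 2 * w + 1) /
          (2 * ((w : ℝ) + n) * (w + n + 1)) := by
  have hw' : (1 : ℝ) ≤ w := by exact_mod_cast hw
  induction n with
  | zero =>
    have h1 : (w : ℝ) ≠ 0 := by positivity
    have h2 : (w : ℝ) + 1 ≠ 0 := by positivity
    simp only [Finset.range_zero, Finset.sum_empty, Nat.cast_zero, add_zero]
    field_simp
    ring
  | succ k ih =>
    have h1 : (w : ℝ) + k ≠ 0 := by positivity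
    have h2 : (w : ℝ) + k + 1 ≠ 0 := by positivity
    have h3 : (w : ℝ) + k + 2 ≠ 0 := by positivity
    rw [Finset.sum_range_succ, ih, polya_prod_aux w hw]
    push_cast
    rw [show (w : ℝ) + (k + 1) = w + k + 1 by ring,
      show (w : ℝ) + k + 1 + 1 = w + k + 2 by ring]
    field_simp
    ring

/-- The waiting time `T_{3,w}` for the first black ball in a Pólya urn with 3 black and
`w ≥ 1` white balls satisfies
`E[T_{3,w}²] = ∑_{n=0}^∞ (2n+1) ∏_{i=0}^{n-1} (w+i)/(3+w+i) = (w+2)(2w+1)/2`. -/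
theorem polya_three_black_second_moment (w : ℕ) (hw : 1 ≤ w) :
    HasSum (fun n : ℕ =>
        (2 * (n : ℝ) + 1) * ∏ i ∈ Finset.range n, (((w : ℝ) + i) / (3 + (w : ℝ) + i)))
      (((w : ℝ) + 2) * (2 * (w : ℝ) + 1) / 2) := by
  have hw' : (1 : ℝ) ≤ w := by exact_mod_cast hw
  rw [hasSum_iff_tendsto_nat_of_nonneg]
  · simp_rw [polya_sum_aux w hw]
    have key : Filter.Tendsto (fun n : ℕ => (w : ℝ) * (w + 1) * (w + 2) * (4 * n + 2 * w + 1) /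
          (2 * ((w : ℝ) + n) * (w + n + 1))) Filter.atTop (nhds 0) := by
      have hb := (tendsto_one_div_add_atTop_nhds_zero_nat (𝕜 := ℝ)).const_mul
        (2 * ((w : ℝ) * (w + 1) * (w + 2)))
      rw [mul_zero] at hb
      refine squeeze_zero (fun n => by positivity) (fun n => ?_) hb
      have hn : (0 : ℝ) ≤ n := Nat.cast_nonneg n
      have h : (4 * (n : ℝ) + 2 * w + 1) / (2 * ((w : ℝ) + n) * (w + n + 1)) ≤
          2 * (1 / ((n : ℝ) + 1)) := by
        rw [mul_one_div, div_le_div_iff₀ (by positivity) (by positivity)]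
        nlinarith [mul_nonneg hn (sub_nonneg.2 hw')]
      have hC : (0 : ℝ) ≤ (w : ℝ) * (w + 1) * (w + 2) := by positivity
      have := mul_le_mul_of_nonneg_left h hC
      rw [mul_div_assoc]
      linarith
    simpa using key.const_sub (((w : ℝ) + 2) * (2 * (w : ℝ) + 1) / 2)
  · intro n
    positivity
end

section
/- Let b, w be positive integers, let (a_k)_{k≥1} be a sequence of positive integers, set s_0 = 0 and s_k = a_1 + ⋯ + a_k for k ≥ 1, and define q_n = ∏_{j=0}^{n-1} (w+s_j)/(b+w+s_j). Then q_n → 0 as n → ∞ if and only if ∑_{j=1}^∞ 1/s_j = ∞. Probabilistically: in the generalized Pólya urn where upon drawing a white ball at time k one returns it together with a_k extra white balls, the first black ball is drawn in finite time with probability one if and only if ∑_{j=1}^∞ 1/s_j diverges. -/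
open Filter

/-- Generalized Pólya urn: starting with `b ≥ 1` black and `w ≥ 1` white balls, upon
drawing a white ball at time `k` one returns it together with `a_k ≥ 1` extra white
balls. With `s_0 = 0`, `s_k = a_1 + ⋯ + a_k`, the probability that the first `n` draws
all yield white balls is `q_n = ∏_{j=0}^{n-1} (w+s_j)/(b+w+s_j)`, and the first black
ball is drawn in finite time with probability one (i.e. `q_n → 0`) if and only if
`∑_{j=1}^∞ 1/s_j` diverges. -/
theorem polya_general_replacement (b w : ℕ) (hb : 1 ≤ b) (hw : 1 ≤ w)
    (a : ℕ → ℕ) (ha : ∀ k, 1 ≤ k → 1 ≤ a k)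
    (s : ℕ → ℕ) (hs0 : s 0 = 0) (hs : ∀ k, s (k + 1) = s k + a (k + 1)) :
    Tendsto (fun n : ℕ => ∏ j ∈ Finset.range n, (((w : ℝ) + s j) / ((b : ℝ) + w + s j)))
        atTop (nhds 0)
      ↔ ¬ Summable (fun j : ℕ => 1 / (s (j + 1) : ℝ)) := by
  have hspos : ∀ j, 1 ≤ s (j + 1) := fun j => by
    have h1 := hs j
    have h2 := ha (j + 1) (by omega)
    omega
  have hbR : (1 : ℝ) ≤ b := by exact_mod_cast hb
  have hwR : (1 : ℝ) ≤ w := by exact_mod_cast hw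
  set c : ℕ → ℝ := fun j => (b : ℝ) / (w + s j) with hc
  have hden : ∀ j, (0 : ℝ) < (w : ℝ) + s j := fun j => by positivity
  have hc0 : ∀ j, 0 ≤ c j := fun j => by simp only [hc]; positivity
  have hfac : ∀ j, ((w : ℝ) + s j) / ((b : ℝ) + w + s j) = (1 + c j)⁻¹ := fun j => by
    have := (hden j).ne'
    have h2 : (b : ℝ) + w + s j ≠ 0 := by positivity
    have h3 : 1 + c j = ((b : ℝ) + w + s j) / ((w : ℝ) + s j) := by
      simp only [hc]; field_simp; ring
    rw [h3, inv_div]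
  have hq : ∀ n, ∏ j ∈ Finset.range n, (((w : ℝ) + s j) / ((b : ℝ) + w + s j))
      = (∏ j ∈ Finset.range n, (1 + c j))⁻¹ := fun n => by
    rw [← Finset.prod_inv_distrib]
    exact Finset.prod_congr rfl (fun j _ => hfac j)
  have hlow : ∀ n, 1 + ∑ j ∈ Finset.range n, c j ≤ ∏ j ∈ Finset.range n, (1 + c j) := by
    intro n
    induction n with
    | zero => simp
    | succ n ih =>
      rw [Finset.sum_range_succ, Finset.prod_range_succ]
      have hS : 0 ≤ ∑ j ∈ Finset.range n, c j := Finset.sum_nonneg (fun j _ => hc0 j)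
      have h1 := mul_le_mul_of_nonneg_right ih (show 0 ≤ 1 + c n by linarith [hc0 n])
      have h2 := mul_nonneg hS (hc0 n)
      nlinarith
  have hup : ∀ n, ∏ j ∈ Finset.range n, (1 + c j) ≤ Real.exp (∑ j ∈ Finset.range n, c j) := by
    intro n
    rw [Real.exp_sum]
    refine Finset.prod_le_prod (fun j _ => by linarith [hc0 j]) (fun j _ => ?_)
    linarith [Real.add_one_le_exp (c j)]
  have hsum : Summable (fun j : ℕ => 1 / (s (j + 1) : ℝ)) ↔ Summable c := by
    rw [← summable_nat_add_iff (f := c) 1]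
    have hsR : ∀ j, (1 : ℝ) ≤ s (j + 1) := fun j => by exact_mod_cast hspos j
    constructor
    · intro h
      refine Summable.of_nonneg_of_le (fun j => hc0 _) (fun j => ?_) (h.mul_left (b : ℝ))
      simp only [hc]
      rw [mul_one_div]
      have := hsR j
      gcongr
      linarith
    · intro h
      refine Summable.of_nonneg_of_le (fun j => by positivity) (fun j => ?_)
        (h.mul_left ((w : ℝ) + 1))
      simp only [hc]
      have := hsR j
      rw [← mul_div_assoc, div_le_div_iff₀ (by linarith) (hden _)]
      have h1 : (w : ℝ) + s (j + 1) ≤ (w + 1) * s (j + 1) := by nlinarith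
      have h2 : (0 : ℝ) ≤ (w + 1) * s (j + 1) := by positivity
      nlinarith
  rw [hsum]
  simp only [hq]
  constructor
  · intro h hS
    have hle : ∀ n, (Real.exp (∑' j, c j))⁻¹ ≤ (∏ j ∈ Finset.range n, (1 + c j))⁻¹ := by
      intro n
      refine inv_anti₀ (Finset.prod_pos (fun j _ => by linarith [hc0 j])) ((hup n).trans ?_)
      exact Real.exp_le_exp.2 (hS.sum_le_tsum _ (fun j _ => hc0 j))
    have h0 := ge_of_tendsto' h hle
    have h1 : 0 < (Real.exp (∑' j, c j))⁻¹ := by positivity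
    linarith
  · intro h
    have ht := (not_summable_iff_tendsto_nat_atTop_of_nonneg hc0).1 h
    exact tendsto_inv_atTop_zero.comp
      (tendsto_atTop_mono (fun n => (by linarith [hlow n] :
        ∑ j ∈ Finset.range n, c j ≤ ∏ j ∈ Finset.range n, (1 + c j))) ht)
end
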